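/- arXiv:2205.07346 — 2 statements merged into one kernel-verified Lean document; each statement's English description precedes it below -/
import Mathlib

section
/- Let F be a finite field, n a natural number, and t a natural number. The maximum cardinality of a set C of linear subspaces of F^n with the property that for all distinct U, V ∈ C, V ⊆ U implies dim U − dim V > t, equals the sum over all ℓ with 0 ≤ ℓ ≤ n and ℓ ≡ ⌊n/2⌋ (mod t+1) of the number of ℓ-dimensional subspaces of F^n. -/
/-!
Fix a complete flag `E` and let `g` range over the general linear group. The codewords on the flag
`g • E` have dimensions which pairwise differ by more than `t`, while a fixed `k`-dimensional
subspace lies on `g • E` for a proportion `1 / [n, k]_q` of all `g`. Averaging the sum of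
`[n, dim U]_q` over the codewords `U` on `g • E` shows that the size of the code is at most the
largest sum of `[n, a]_q` over a set of dimensions `a` with pairwise gaps more than `t`.

The coefficients `[n, k]_q` are symmetric in `k` and at least double at each step up to `n / 2`.
If a set of dimensions contains `n / 2` (or, after reflection, `n - n / 2`), rounding each of its
elements towards `n / 2` to the residue class of `n / 2` modulo `t + 1` is injective and increases
the weights. Otherwise each half of the set can first be moved one step towards the middle, which
doubles its weight, and this makes up for the fact that the roundings of the two halves may overlap.
-/

open Finset Module MulAction
open scoped Pointwise

section SumComparison

variable {ι κ N : Type*} [AddCommMonoid N]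

lemma sum_le_sum_of_mapsTo_of_injOn [PartialOrder N] [IsOrderedAddMonoid N]
    [CanonicallyOrderedAdd N] {s : Finset ι} {t : Finset κ} {v : ι → N} {w : κ → N} (f : ι → κ)
    (hmaps : Set.MapsTo f s t) (hinj : Set.InjOn f s) (hle : ∀ i ∈ s, v i ≤ w (f i)) :
    ∑ i ∈ s, v i ≤ ∑ j ∈ t, w j := by
  classical
  calc ∑ i ∈ s, v i ≤ ∑ i ∈ s, w (f i) := sum_le_sum hle
    _ = ∑ j ∈ s.image f, w j := (sum_image hinj).symm
    _ ≤ ∑ j ∈ t, w j := sum_le_sum_of_subset (image_subset_iff.2 hmaps)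

lemma sum_filter_le_add_sum_filter_ge [LinearOrder ι] {s : Finset ι} {m : ι} (hm : m ∈ s)
    (w : ι → N) :
    ∑ i ∈ s with i ≤ m, w i + ∑ i ∈ s with m ≤ i, w i = ∑ i ∈ s, w i + w m := by
  have hunion : ({i ∈ s | i ≤ m} ∪ {i ∈ s | m ≤ i} : Finset ι) = s := by
    rw [← filter_or, filter_true_of_mem fun i _ ↦ le_total i m]
  have hinter : ({i ∈ s | i ≤ m} ∩ {i ∈ s | m ≤ i} : Finset ι) = {m} := by
    ext i
    simp only [mem_inter, mem_filter, mem_singleton]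
    exact ⟨fun h ↦ le_antisymm h.1.2 h.2.2, by rintro rfl; exact ⟨⟨hm, le_rfl⟩, hm, le_rfl⟩⟩
  rw [← sum_union_inter, hunion, hinter, sum_singleton]

end SumComparison

lemma monotoneOn_Iic_of_two_mul_le {m : ℕ} {w : ℕ → ℕ} (hw : ∀ k < m, 2 * w k ≤ w (k + 1)) :
    MonotoneOn w (Set.Iic m) :=
  monotoneOn_of_le_add_one Set.ordConnected_Iic fun k _ _ hk ↦
    (Nat.le_mul_of_pos_left _ two_pos).trans (hw k hk)

/-- A set of natural numbers whose distinct elements differ by more than `t`: the possible sets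
of dimensions of the codewords that lie on a common flag. -/
def IsGapped (t : ℕ) (s : Finset ℕ) : Prop :=
  ∀ a ∈ s, ∀ b ∈ s, a < b → a + t < b

namespace IsGapped

variable {t : ℕ} {s : Finset ℕ}

lemma filter (hs : IsGapped t s) (p : ℕ → Prop) [DecidablePred p] : IsGapped t {a ∈ s | p a} :=
  fun a ha b hb ↦ hs a (mem_filter.1 ha).1 b (mem_filter.1 hb).1

lemma image_add_right (hs : IsGapped t s) (c : ℕ) : IsGapped t (s.image (· + c)) := by
  simp only [IsGapped, forall_mem_image]
  intro a ha b hb hab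
  have := hs a ha b hb (by lia)
  lia

lemma image_sub_left {n : ℕ} (hs : IsGapped t s) (hn : ∀ a ∈ s, a ≤ n) :
    IsGapped t (s.image (n - ·)) := by
  simp only [IsGapped, forall_mem_image]
  intro a ha b hb hab
  have := hs b hb a ha (by lia)
  have := hn a ha
  lia

lemma injOn {f : ℕ → ℕ} (hs : IsGapped t s) (hf : ∀ a ∈ s, ∀ b ∈ s, f a = f b → b ≤ a + t) :
    Set.InjOn f s := by
  intro a ha b hb hab
  have hba := hf a ha b hb hab
  have hab' := hf b hb a ha hab.symm
  rcases lt_trichotomy a b with h | h | h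
  · exact absurd (hs a ha b hb h) hba.not_gt
  · exact h
  · exact absurd (hs b hb a ha h) hab'.not_gt

variable {m n : ℕ} {w : ℕ → ℕ}

-- Each `a` is rounded up to the nearest number congruent to `m`.
lemma sum_le_sum_of_monotoneOn (hs : IsGapped t s) (hsm : ∀ a ∈ s, a ≤ m)
    (hw : MonotoneOn w (Set.Iic m)) :
    ∑ a ∈ s, w a ≤ ∑ ℓ ∈ range (m + 1) with ℓ % (t + 1) = m % (t + 1), w ℓ := by
  have hmod_le (a : ℕ) : (m - a) % (t + 1) ≤ t := Nat.lt_succ_iff.1 (Nat.mod_lt _ t.succ_pos)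
  have hround_le {a : ℕ} (ha : a ∈ s) : a + (m - a) % (t + 1) ≤ m := by
    have := Nat.mod_le (m - a) (t + 1)
    have := hsm a ha
    lia
  refine sum_le_sum_of_mapsTo_of_injOn (fun a ↦ a + (m - a) % (t + 1)) (fun a ha ↦ ?_)
    (hs.injOn fun a _ b _ hab ↦ ?_) fun a ha ↦ ?_
  · rw [mem_coe, mem_filter, mem_range, Nat.add_mod_mod, Nat.add_sub_of_le (hsm a ha)]
    exact ⟨Nat.lt_succ_of_le (hround_le ha), rfl⟩
  · have := hmod_le a
    lia
  · exact hw (hsm a ha) (hround_le ha) (Nat.le_add_right _ _)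

-- Each `a` is rounded down to the nearest number congruent to `m`.
lemma sum_le_sum_of_antitoneOn (hs : IsGapped t s) (hsm : ∀ a ∈ s, a ∈ Icc m n)
    (hw : AntitoneOn w (Set.Icc m n)) :
    ∑ a ∈ s, w a ≤ ∑ ℓ ∈ Icc m n with ℓ % (t + 1) = m % (t + 1), w ℓ := by
  have hmod_le (a : ℕ) : (a - m) % (t + 1) ≤ t := Nat.lt_succ_iff.1 (Nat.mod_lt _ t.succ_pos)
  have hround_mem {a : ℕ} (ha : a ∈ s) : a - (a - m) % (t + 1) ∈ Icc m n := by
    have := Nat.mod_le (a - m) (t + 1)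
    have := mem_Icc.1 (hsm a ha)
    exact mem_Icc.2 (by lia)
  refine sum_le_sum_of_mapsTo_of_injOn (fun a ↦ a - (a - m) % (t + 1)) (fun a ha ↦ ?_)
    (hs.injOn fun a _ b _ hab ↦ ?_) fun a ha ↦ ?_
  · have hround_mod : m ≡ a - (a - m) % (t + 1) [MOD t + 1] := by
      rw [Nat.modEq_iff_dvd' (mem_Icc.1 (hround_mem ha)).1, Nat.sub_right_comm]
      exact Nat.dvd_sub_mod _
    exact mem_filter.2 ⟨hround_mem ha, hround_mod.symm⟩
  · have := hmod_le b
    have := Nat.mod_le (a - m) (t + 1)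
    lia
  · exact hw (mem_Icc.1 (hround_mem ha)) (mem_Icc.1 (hsm a ha)) (Nat.sub_le _ _)

-- Shifting `s` up by one at least doubles the weights, and its elements stay at most `m`.
lemma two_mul_sum_le_sum_of_doubling (hs : IsGapped t s) (hsm : ∀ a ∈ s, a < m)
    (hw : ∀ k < m, 2 * w k ≤ w (k + 1)) :
    2 * ∑ a ∈ s, w a ≤ ∑ ℓ ∈ range (m + 1) with ℓ % (t + 1) = m % (t + 1), w ℓ := by
  calc 2 * ∑ a ∈ s, w a ≤ ∑ a ∈ s, w (a + 1) := by
        rw [mul_sum]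
        exact sum_le_sum fun a ha ↦ hw a (hsm a ha)
    _ = ∑ a ∈ s.image (· + 1), w a := (sum_image (add_left_injective 1).injOn).symm
    _ ≤ _ := (hs.image_add_right 1).sum_le_sum_of_monotoneOn (forall_mem_image.2 hsm)
      (monotoneOn_Iic_of_two_mul_le hw)

end IsGapped

section SymmetricDoubling

variable {n t : ℕ} {s : Finset ℕ} {w : ℕ → ℕ}

lemma sum_image_sub_left (hsymm : ∀ k ≤ n, w (n - k) = w k) (hsn : ∀ a ∈ s, a ≤ n) :
    ∑ a ∈ s.image (n - ·), w a = ∑ a ∈ s, w a := by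
  have hinj : Set.InjOn (n - ·) (s : Set ℕ) := by
    intro a ha b hb hab
    have := hsn a ha
    have := hsn b hb
    change n - a = n - b at hab
    lia
  rw [sum_image hinj]
  exact sum_congr rfl fun a ha ↦ hsymm a (hsn a ha)

lemma antitoneOn_Icc_half (hsymm : ∀ k ≤ n, w (n - k) = w k)
    (hmono : MonotoneOn w (Set.Iic (n / 2))) : AntitoneOn w (Set.Icc (n / 2) n) := by
  rintro a ⟨ha, -⟩ b ⟨-, hb⟩ hab
  rcases hab.eq_or_lt with rfl | hlt
  · rfl
  rw [← hsymm b hb]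
  rcases ha.eq_or_lt with rfl | ha
  · exact hmono (Set.mem_Iic.2 (by lia)) Set.self_mem_Iic (by lia)
  · rw [← hsymm a (hab.trans hb)]
    exact hmono (Set.mem_Iic.2 (by lia)) (Set.mem_Iic.2 (by lia)) (by lia)

lemma IsGapped.sum_le_sum_modEq_half_of_half_mem (hs : IsGapped t s) (hsn : ∀ a ∈ s, a ≤ n)
    (hmono : MonotoneOn w (Set.Iic (n / 2))) (hanti : AntitoneOn w (Set.Icc (n / 2) n))
    (hmem : n / 2 ∈ s) :
    ∑ a ∈ s, w a ≤ ∑ ℓ ∈ range (n + 1) with ℓ % (t + 1) = n / 2 % (t + 1), w ℓ := by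
  set P : Finset ℕ := {ℓ ∈ range (n + 1) | ℓ % (t + 1) = n / 2 % (t + 1)}
  have hlower : ∑ a ∈ s with a ≤ n / 2, w a ≤ ∑ ℓ ∈ P with ℓ ≤ n / 2, w ℓ := by
    convert (hs.filter (· ≤ n / 2)).sum_le_sum_of_monotoneOn
      (fun a ha ↦ (mem_filter.1 ha).2) hmono using 2
    grind
  have hupper : ∑ a ∈ s with n / 2 ≤ a, w a ≤ ∑ ℓ ∈ P with n / 2 ≤ ℓ, w ℓ := by
    convert (hs.filter (n / 2 ≤ ·)).sum_le_sum_of_antitoneOn (fun a ha ↦ ?_) hanti using 2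
    · grind
    · grind
  have hmemP : n / 2 ∈ P := by grind
  have hs_split := sum_filter_le_add_sum_filter_ge hmem w
  have hP_split := sum_filter_le_add_sum_filter_ge hmemP w
  lia

lemma IsGapped.sum_le_sum_modEq_half_of_half_notMem (hs : IsGapped t s) (hsn : ∀ a ∈ s, a ≤ n)
    (hsymm : ∀ k ≤ n, w (n - k) = w k) (hdouble : ∀ k < n / 2, 2 * w k ≤ w (k + 1))
    (hmem : n / 2 ∉ s) (hmem' : n - n / 2 ∉ s) :
    ∑ a ∈ s, w a ≤ ∑ ℓ ∈ range (n + 1) with ℓ % (t + 1) = n / 2 % (t + 1), w ℓ := by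
  have hlower := (hs.filter (· < n / 2)).two_mul_sum_le_sum_of_doubling
    (fun a ha ↦ (mem_filter.1 ha).2) hdouble
  have hle : ∀ a ∈ s.filter (¬ · < n / 2), a ≤ n := fun a ha ↦ hsn a (mem_filter.1 ha).1
  have hreflect : ∀ b ∈ (s.filter (¬ · < n / 2)).image (n - ·), b < n / 2 := by
    simp only [forall_mem_image, mem_filter]
    rintro a ⟨ha, hna⟩
    have := hsn a ha
    have : a ≠ n / 2 := fun h ↦ hmem (h ▸ ha)
    have : a ≠ n - n / 2 := fun h ↦ hmem' (h ▸ ha)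
    lia
  have hupper := ((hs.filter _).image_sub_left hle).two_mul_sum_le_sum_of_doubling hreflect hdouble
  rw [sum_image_sub_left hsymm hle] at hupper
  have hsubset : ∑ ℓ ∈ range (n / 2 + 1) with ℓ % (t + 1) = n / 2 % (t + 1), w ℓ ≤
      ∑ ℓ ∈ range (n + 1) with ℓ % (t + 1) = n / 2 % (t + 1), w ℓ :=
    sum_le_sum_of_subset (filter_subset_filter _ (range_subset_range.2 (by lia)))
  have hsplit := sum_filter_add_sum_filter_not s (· < n / 2) w
  lia

theorem IsGapped.sum_le_sum_modEq_half (hs : IsGapped t s) (hsn : ∀ a ∈ s, a ≤ n)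
    (hsymm : ∀ k ≤ n, w (n - k) = w k) (hdouble : ∀ k < n / 2, 2 * w k ≤ w (k + 1)) :
    ∑ a ∈ s, w a ≤ ∑ ℓ ∈ range (n + 1) with ℓ % (t + 1) = n / 2 % (t + 1), w ℓ := by
  have hmono := monotoneOn_Iic_of_two_mul_le hdouble
  have hanti := antitoneOn_Icc_half hsymm hmono
  by_cases hmem : n / 2 ∈ s
  · exact hs.sum_le_sum_modEq_half_of_half_mem hsn hmono hanti hmem
  by_cases hmem' : n - n / 2 ∈ s
  · rw [← sum_image_sub_left hsymm hsn]
    exact (hs.image_sub_left hsn).sum_le_sum_modEq_half_of_half_mem (by grind) hmono hanti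
      (mem_image.2 ⟨_, hmem', Nat.sub_sub_self (Nat.div_le_self n 2)⟩)
  · exact hs.sum_le_sum_modEq_half_of_half_notMem hsn hsymm hdouble hmem hmem'

end SymmetricDoubling

section Averaging

variable {G α : Type*} [Group G] [MulAction G α]

lemma natCard_smul_eq_mul_natCard_orbit {a b : α} (h : b ∈ orbit G a) :
    Nat.card {g : G // g • a = b} * Nat.card (orbit G b) = Nat.card G := by
  obtain ⟨x, rfl⟩ := h
  have e : {g : G // g • a = x • a} ≃ stabilizer G a :=
    (Equiv.mulLeft x⁻¹).subtypeEquiv fun g ↦ by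
      simp [mem_stabilizer_iff, mul_smul, inv_smul_eq_iff]
  rw [orbit_smul, Nat.card_congr e, mul_comm, ← Nat.card_prod,
    Nat.card_congr (orbitProdStabilizerEquivGroup G a)]

lemma card_le_of_forall_sum_natCard_orbit_le [Finite G] [DecidableEq α] {s : Finset α} {e : α → α}
    {M : ℕ} (he : ∀ x ∈ s, x ∈ orbit G (e x))
    (hM : ∀ g : G, ∑ x ∈ s with g • e x = x, Nat.card (orbit G x) ≤ M) : #s ≤ M := by
  have := Fintype.ofFinite G
  refine Nat.le_of_mul_le_mul_right ?_ (Nat.card_pos (α := G))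
  calc #s * Nat.card G = ∑ x ∈ s, ∑ g : G, if g • e x = x then Nat.card (orbit G x) else 0 := by
        rw [← smul_eq_mul, ← sum_const]
        refine sum_congr rfl fun x hx ↦ ?_
        rw [← natCard_smul_eq_mul_natCard_orbit (he x hx), ← sum_filter, sum_const, smul_eq_mul,
          Nat.card_eq_fintype_card, Fintype.card_subtype]
    _ = ∑ g : G, ∑ x ∈ s with g • e x = x, Nat.card (orbit G x) := by
        simp only [sum_comm (s := s), sum_filter]
    _ ≤ ∑ _g : G, M := sum_le_sum fun g _ ↦ hM g
    _ = M * Nat.card G := by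
        rw [sum_const, smul_eq_mul, card_univ, Nat.card_eq_fintype_card, mul_comm]

end Averaging

section Subspaces

variable {F V W : Type*} [Field F] [AddCommGroup V] [Module F V] [AddCommGroup W] [Module F W]

variable (F V) in
/-- The number of `k`-dimensional subspaces of `V`: the Gaussian binomial coefficient
`C(finrank F V, k)_q` when `F` has `q` elements. -/
noncomputable def numSubspaces (k : ℕ) : ℕ :=
  Nat.card {U : Submodule F V // finrank F U = k}

lemma numSubspaces_congr (e : V ≃ₗ[F] W) (k : ℕ) : numSubspaces F V k = numSubspaces F W k :=
  Nat.card_congr <| (Submodule.orderIsoMapComap e).toEquiv.subtypeEquiv fun U ↦ by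
    change _ ↔ finrank F (U.map (e : V →ₗ[F] W)) = k
    rw [LinearEquiv.finrank_map_eq]

lemma numSubspaces_finrank_sub [FiniteDimensional F V] {k : ℕ} (hk : k ≤ finrank F V) :
    numSubspaces F V (finrank F V - k) = numSubspaces F V k := by
  rw [numSubspaces_congr (LinearEquiv.ofFinrankEq V (Dual F V) Subspace.dual_finrank_eq.symm) k]
  refine Nat.card_congr <|
    (Subspace.orderIsoFiniteDimensional.toEquiv.trans OrderDual.ofDual).subtypeEquiv fun U ↦ ?_
  have := Subspace.finrank_add_finrank_dualAnnihilator_eq U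
  change _ ↔ finrank F U.dualAnnihilator = k
  lia

lemma numSubspaces_one [Finite F] [FiniteDimensional F V] :
    numSubspaces F V 1 = ∑ i ∈ range (finrank F V), Nat.card F ^ i := by
  rw [← Projectivization.card_of_finrank F V rfl]
  exact (Nat.card_congr (Projectivization.equivSubmodule F V)).symm

lemma natCard_le_and_finrank_eq (U : Submodule F V) (k : ℕ) :
    Nat.card {X : Submodule F V // X ≤ U ∧ finrank F X = k} = numSubspaces F U k := by
  have e : {Y : Submodule F U // finrank F Y = k} ≃
      {X : Set.Iic U // finrank F (X : Submodule F V) = k} :=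
    U.mapIic.toEquiv.subtypeEquiv fun Y ↦ by
      change _ ↔ finrank F (Y.map U.subtype) = k
      rw [Submodule.finrank_map_subtype_eq]
  exact Nat.card_congr (e.trans (Equiv.subtypeSubtypeEquivSubtypeInter (· ≤ U)
    fun X : Submodule F V ↦ finrank F X = k)).symm

lemma finrank_comap_mkQ [FiniteDimensional F V] (U : Submodule F V) (Y : Submodule F (V ⧸ U)) :
    finrank F (Y.comap U.mkQ) = finrank F U + finrank F Y := by
  have hquot := (Submodule.quotientQuotientEquivQuotient U (Y.comap U.mkQ)
    (U.le_comap_mkQ Y)).finrank_eq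
  rw [Submodule.map_comap_eq_of_surjective U.mkQ_surjective] at hquot
  have := (Y.comap U.mkQ).finrank_quotient_add_finrank
  have := Y.finrank_quotient_add_finrank
  have := U.finrank_quotient_add_finrank
  lia

lemma natCard_ge_and_finrank_eq [FiniteDimensional F V] (U : Submodule F V) (k : ℕ) :
    Nat.card {X : Submodule F V // U ≤ X ∧ finrank F X = finrank F U + k} =
      numSubspaces F (V ⧸ U) k := by
  have e : {Y : Submodule F (V ⧸ U) // finrank F Y = k} ≃
      {X : Set.Ici U // finrank F (X : Submodule F V) = finrank F U + k} :=
    U.comapMkQRelIso.toEquiv.subtypeEquiv fun Y ↦ by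
      change _ ↔ finrank F (Y.comap U.mkQ) = _
      rw [finrank_comap_mkQ, Nat.add_left_cancel_iff]
  exact Nat.card_congr (e.trans (Equiv.subtypeSubtypeEquivSubtypeInter (U ≤ ·)
    fun X : Submodule F V ↦ finrank F X = finrank F U + k)).symm

lemma two_mul_geom_sum_le {q a b : ℕ} (hq : 2 ≤ q) (hab : a < b) :
    2 * ∑ i ∈ range a, q ^ i ≤ ∑ i ∈ range b, q ^ i :=
  calc 2 * ∑ i ∈ range a, q ^ i ≤ q * ∑ i ∈ range a, q ^ i := Nat.mul_le_mul_right _ hq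
    _ ≤ ∑ i ∈ range (a + 1), q ^ i := by
        rw [geom_sum_succ]
        exact Nat.le_succ _
    _ ≤ ∑ i ∈ range b, q ^ i := sum_le_sum_of_subset (range_subset_range.2 hab)

lemma card_filter_finrank_eq [Fintype (Submodule F V)] (k : ℕ) :
    #{U : Submodule F V | finrank F U = k} = numSubspaces F V k :=
  (Nat.subtype_card _ fun _ ↦ mem_filter_univ _).symm

theorem two_mul_numSubspaces_le [Finite F] [FiniteDimensional F V] {k : ℕ}
    (hk : k < finrank F V / 2) : 2 * numSubspaces F V k ≤ numSubspaces F V (k + 1) := by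
  classical
  have := Module.finite_of_finite F (M := V)
  have := Fintype.ofFinite (Submodule F V)
  set c := ∑ i ∈ range (k + 1), Nat.card F ^ i
  have habove : ∀ U ∈ ({U | finrank F U = k} : Finset (Submodule F V)),
      2 * c ≤ #(bipartiteAbove (· ≤ ·) ({X | finrank F X = k + 1} : Finset (Submodule F V)) U) := by
    intro U hU
    rw [mem_filter_univ] at hU
    have hquot := U.finrank_quotient_add_finrank
    rw [bipartiteAbove, filter_filter, filter_congr fun _ _ ↦ and_comm,
      ← Nat.subtype_card _ fun _ ↦ mem_filter_univ _, ← hU, natCard_ge_and_finrank_eq,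
      numSubspaces_one]
    exact two_mul_geom_sum_le Finite.one_lt_card (by lia)
  have hbelow : ∀ X ∈ ({X | finrank F X = k + 1} : Finset (Submodule F V)),
      #(bipartiteBelow (· ≤ ·) ({U | finrank F U = k} : Finset (Submodule F V)) X) ≤ c := by
    intro X hX
    rw [mem_filter_univ] at hX
    rw [bipartiteBelow, filter_filter, filter_congr fun _ _ ↦ and_comm,
      ← Nat.subtype_card _ fun _ ↦ mem_filter_univ _, natCard_le_and_finrank_eq,
      ← numSubspaces_finrank_sub (by lia), hX, Nat.add_sub_cancel_left, numSubspaces_one, hX]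
  have hincidence := card_mul_le_card_mul (· ≤ ·) habove hbelow
  rw [card_filter_finrank_eq, card_filter_finrank_eq, ← mul_assoc, mul_comm _ 2] at hincidence
  have hc_pos : 0 < c := sum_pos (fun i _ ↦ pow_pos Nat.card_pos i) nonempty_range_add_one
  exact Nat.le_of_mul_le_mul_right hincidence hc_pos

end Subspaces

section Flags

variable {F V : Type*} [Field F] [AddCommGroup V] [Module F V] [FiniteDimensional F V]

lemma exists_linearEquiv_map_eq {U W : Submodule F V} (h : finrank F U = finrank F W) :
    ∃ g : V ≃ₗ[F] V, U.map (g : V →ₗ[F] V) = W := by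
  obtain ⟨U', hU⟩ := U.exists_isCompl
  obtain ⟨W', hW⟩ := W.exists_isCompl
  have := Submodule.finrank_add_eq_of_isCompl hU
  have := Submodule.finrank_add_eq_of_isCompl hW
  let e : U ≃ₗ[F] W := LinearEquiv.ofFinrankEq _ _ h
  let e' : U' ≃ₗ[F] W' := LinearEquiv.ofFinrankEq _ _ (by lia)
  let g : V ≃ₗ[F] V := (U.prodEquivOfIsCompl U' hU).symm ≪≫ₗ e.prodCongr e' ≪≫ₗ
    W.prodEquivOfIsCompl W' hW
  have hg (u : U) : g u = e u := by simp [g]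
  refine ⟨g, Submodule.eq_of_le_of_finrank_eq ?_ ((LinearEquiv.finrank_map_eq g U).trans h)⟩
  rintro _ ⟨u, hu, rfl⟩
  exact (hg ⟨u, hu⟩).symm ▸ (e ⟨u, hu⟩).2

lemma mem_orbit_linearEquiv_iff {U W : Submodule F V} :
    U ∈ orbit (V ≃ₗ[F] V) W ↔ finrank F U = finrank F W := by
  refine ⟨?_, fun h ↦ exists_linearEquiv_map_eq h.symm⟩
  rintro ⟨g, rfl⟩
  exact LinearEquiv.finrank_map_eq g W

lemma natCard_orbit_linearEquiv (U : Submodule F V) :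
    Nat.card (orbit (V ≃ₗ[F] V) U) = numSubspaces F V (finrank F U) :=
  Nat.card_congr (Equiv.subtypeEquivRight fun _ ↦ mem_orbit_linearEquiv_iff)

variable (F V) in
lemma exists_monotone_finrank_eq :
    ∃ E : ℕ → Submodule F V, Monotone E ∧ ∀ k ≤ finrank F V, finrank F (E k) = k := by
  let b := finBasis F V
  refine ⟨fun k ↦ Submodule.span F (b '' {i | i.val < k}), fun k l hkl ↦ ?_, fun k hk ↦ ?_⟩
  · exact Submodule.span_mono (Set.image_mono fun i hi ↦ lt_of_lt_of_le hi hkl)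
  · classical
    have hli : LinearIndepOn F id (b '' {i | i.val < k}) :=
      (b.linearIndependent.linearIndepOn _).id_image
    rw [finrank_span_set_eq_card hli, Set.toFinset_image, card_image_of_injective _ b.injective,
      Set.toFinset_ofPred, Fin.card_filter_val_lt]
    exact min_eq_right hk

end Flags

section Codes

variable {F V : Type*} [Field F] [AddCommGroup V] [Module F V] {t : ℕ} {C : Finset (Submodule F V)}

/-- The subspace code `C` detects dimension reductions of up to `t`: a codeword properly contained
in another one has dimension smaller by more than `t`. -/
def DetectsDimReductions (t : ℕ) (C : Finset (Submodule F V)) : Prop :=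
  ∀ U ∈ C, ∀ W ∈ C, U ≠ W → W ≤ U → t < finrank F U - finrank F W

namespace DetectsDimReductions

lemma isGapped_image_finrank (hC : DetectsDimReductions t C) {E : ℕ → Submodule F V}
    (hE : Monotone E) (hCE : ∀ U ∈ C, E (finrank F U) = U) :
    IsGapped t (C.image fun U : Submodule F V ↦ finrank F U) := by
  simp only [IsGapped, forall_mem_image]
  intro W hW U hU hlt
  have hne : U ≠ W := by
    rintro rfl
    exact hlt.false
  have hle : W ≤ U := by
    rw [← hCE W hW, ← hCE U hU]
    exact hE hlt.le
  have := hC U hU W hW hne hle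
  lia

lemma subset (hC : DetectsDimReductions t C) {D : Finset (Submodule F V)} (hD : D ⊆ C) :
    DetectsDimReductions t D :=
  fun U hU W hW ↦ hC U (hD hU) W (hD hW)

variable [Finite F] [FiniteDimensional F V]

lemma sum_numSubspaces_le_of_flag (hC : DetectsDimReductions t C) {E : ℕ → Submodule F V}
    (hE : Monotone E) (hCE : ∀ U ∈ C, E (finrank F U) = U) :
    ∑ U ∈ C, numSubspaces F V (finrank F U) ≤
      ∑ ℓ ∈ range (finrank F V + 1) with ℓ % (t + 1) = finrank F V / 2 % (t + 1),
        numSubspaces F V ℓ := by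
  have hinj : Set.InjOn (fun U : Submodule F V ↦ finrank F U) C :=
    Set.LeftInvOn.injOn (f₁' := E) hCE
  rw [← sum_image (f := numSubspaces F V) hinj]
  exact (hC.isGapped_image_finrank hE hCE).sum_le_sum_modEq_half
    (forall_mem_image.2 fun U _ ↦ U.finrank_le) (fun k ↦ numSubspaces_finrank_sub)
    fun k ↦ two_mul_numSubspaces_le

theorem card_le (hC : DetectsDimReductions t C) :
    #C ≤ ∑ ℓ ∈ range (finrank F V + 1) with ℓ % (t + 1) = finrank F V / 2 % (t + 1),
      numSubspaces F V ℓ := by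
  classical
  have := Module.finite_of_finite F (M := V)
  have : Finite (V ≃ₗ[F] V) := Finite.of_injective _ DFunLike.coe_injective
  obtain ⟨E, hE, hE_finrank⟩ := exists_monotone_finrank_eq F V
  refine card_le_of_forall_sum_natCard_orbit_le (G := V ≃ₗ[F] V) (e := fun U ↦ E (finrank F U))
    (fun U _ ↦ mem_orbit_linearEquiv_iff.2 (hE_finrank _ U.finrank_le).symm) fun g ↦ ?_
  simp only [natCard_orbit_linearEquiv]
  exact (hC.subset (filter_subset _ _)).sum_numSubspaces_le_of_flag (E := fun k ↦ g • E k)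
    (fun k l hkl ↦ Submodule.map_mono (hE hkl)) fun U hU ↦ (mem_filter.1 hU).2

end DetectsDimReductions

lemma detectsDimReductions_filter_modEq [FiniteDimensional F V] [Fintype (Submodule F V)]
    (t r : ℕ) : DetectsDimReductions t {U : Submodule F V | finrank F U % (t + 1) = r} := by
  intro U hU W hW hne hle
  rw [mem_filter_univ] at hU hW
  have hlt := Submodule.finrank_lt_finrank_of_lt (hle.lt_of_ne hne.symm)
  exact Nat.le_of_dvd (Nat.sub_pos_of_lt hlt)
    ((Nat.modEq_iff_dvd' hlt.le).1 (hW.trans hU.symm))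

lemma card_filter_comp_finrank [FiniteDimensional F V] [Fintype (Submodule F V)] (p : ℕ → Prop)
    [DecidablePred p] :
    #{U : Submodule F V | p (finrank F U)} =
      ∑ ℓ ∈ range (finrank F V + 1) with p ℓ, numSubspaces F V ℓ := by
  rw [card_eq_sum_card_fiberwise (f := fun U : Submodule F V ↦ finrank F U)
    (t := {ℓ ∈ range (finrank F V + 1) | p ℓ}) fun U hU ↦ ?_]
  · refine sum_congr rfl fun ℓ hℓ ↦ ?_
    rw [← card_filter_finrank_eq, filter_filter]
    refine congrArg card (filter_congr fun U _ ↦ and_iff_right_of_imp ?_)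
    rintro rfl
    exact (mem_filter.1 hℓ).2
  · rw [mem_coe, mem_filter_univ] at hU
    exact mem_filter.2 ⟨mem_range_succ_iff.2 U.finrank_le, hU⟩

end Codes

theorem stmt8_general (F V : Type*) [Field F] [Finite F] [AddCommGroup V] [Module F V]
    [FiniteDimensional F V] (t : ℕ) :
    IsGreatest {k | ∃ C : Finset (Submodule F V), DetectsDimReductions t C ∧ #C = k}
      (∑ ℓ ∈ range (finrank F V + 1) with ℓ % (t + 1) = finrank F V / 2 % (t + 1),
        numSubspaces F V ℓ) := by
  have := Module.finite_of_finite F (M := V)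
  have := Fintype.ofFinite (Submodule F V)
  refine ⟨⟨_, detectsDimReductions_filter_modEq t _,
    card_filter_comp_finrank (· % (t + 1) = _)⟩, ?_⟩
  rintro _ ⟨C, hC, rfl⟩
  exact hC.card_le

/-- q-analog of Katona's theorem: the maximum cardinality of a subspace code
`C ⊆ P_q(n)` detecting dimension reductions of up to `t` (distinct nested codeword
subspaces have dimensions differing by more than `t`) equals the sum of the numbers
of `ℓ`-dimensional subspaces over `0 ≤ ℓ ≤ n` with `ℓ ≡ ⌊n/2⌋ (mod t+1)`. -/
theorem stmt8 (F : Type*) [Field F] [Fintype F] (n t : ℕ) :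
    IsGreatest {k | ∃ C : Finset (Submodule F (Fin n → F)),
        (∀ U ∈ C, ∀ V ∈ C, U ≠ V → V ≤ U →
          Module.finrank F U - Module.finrank F V > t) ∧ C.card = k}
      (∑ ℓ ∈ Finset.range (n + 1),
        if ℓ % (t + 1) = (n / 2) % (t + 1) then
          Nat.card {U : Submodule F (Fin n → F) // Module.finrank F U = ℓ}
        else 0) := by
  simpa only [sum_filter, finrank_fin_fun] using! stmt8_general F (Fin n → F) t
end

section
/- Let F be a finite field and n a natural number. The maximum cardinality of a set C of linear subspaces of F^n such that no member of C is properly contained in another member of C (i.e., an antichain in the subspace lattice) equals the number of ⌊n/2⌋-dimensional subspaces of F^n. -/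
/-!
Let `G = GL(V)` and let `c` be a complete flag of `V`. Two subspaces lie in the same `G`-orbit iff
they have the same dimension, so every subspace `U` is moved into `c` by at least `|G| / N (dim U)`
elements of `G`, where `N k` is the number of `k`-dimensional subspaces. A single element of `G`
cannot move two members of an antichain into the chain `c`, so summing over an antichain `C` gives
the LYM inequality `∑ U ∈ C, 1 / N (dim U) ≤ 1`. Finally `N k ≤ N ⌊n / 2⌋` for all `k`, because
`N (k + 1) * (q ^ (k + 1) - 1) = N k * (q ^ (n - k) - 1)`.
-/

open Module MulAction Finset
open scoped Pointwise

section Action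

variable {G P : Type*} [Group G] [MulAction G P]

theorem card_le_ncard_orbit_mul_ncard_smul_mem [Finite G] {x : P} {s : Set P}
    (h : (orbit G x ∩ s).Nonempty) :
    Nat.card G ≤ (orbit G x).ncard * {g : G | g • x ∈ s}.ncard := by
  obtain ⟨_, ⟨a, rfl⟩, ha⟩ := h
  rw [← (stabilizer G x).index_mul_card, index_stabilizer]
  gcongr
  refine Nat.card_le_card_of_injective
    (fun g : stabilizer G x ↦ (⟨a * g, ?_⟩ : {g : G | g • x ∈ s})) fun g₁ g₂ hg ↦ ?_
  · simpa only [Set.mem_ofPred_eq, mul_smul, mem_stabilizer_iff.1 g.2] using ha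
  · simpa using hg

variable [Preorder P] [CovariantClass G P HSMul.hSMul LE.le]

theorem pairwiseDisjoint_smul_mem_of_isAntichain {C s : Set P} (hC : IsAntichain (· ≤ ·) C)
    (hs : IsChain (· ≤ ·) s) : C.PairwiseDisjoint fun x ↦ {g : G | g • x ∈ s} := by
  have le_of_smul_le {g : G} {x y : P} (h : g • x ≤ g • y) : x ≤ y := by
    simpa only [inv_smul_smul] using smul_mono_right g⁻¹ h
  intro x hx y hy hxy
  refine Set.disjoint_left.2 fun g hgx hgy ↦ ?_
  rcases hs.total hgx hgy with h | h
  · exact hC hx hy hxy (le_of_smul_le h)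
  · exact hC hy hx hxy.symm (le_of_smul_le h)

theorem sum_ncard_smul_mem_le_card [Finite G] {C : Finset P} {s : Set P}
    (hC : IsAntichain (· ≤ ·) (C : Set P)) (hs : IsChain (· ≤ ·) s) :
    ∑ x ∈ C, {g : G | g • x ∈ s}.ncard ≤ Nat.card G := by
  rw [← finsum_mem_coe_finset, ← C.finite_toSet.ncard_biUnion (fun _ _ ↦ Set.toFinite _)
    (pairwiseDisjoint_smul_mem_of_isAntichain hC hs)]
  exact Set.ncard_le_card _

theorem sum_inv_ncard_orbit_le_one [Finite G] {C : Finset P} {s : Set P}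
    (hC : IsAntichain (· ≤ ·) (C : Set P)) (hs : IsChain (· ≤ ·) s)
    (hCs : ∀ x ∈ C, (orbit G x ∩ s).Nonempty) :
    ∑ x ∈ C, ((orbit G x).ncard : ℚ)⁻¹ ≤ 1 := by
  have hG : (0 : ℚ) < Nat.card G := mod_cast Nat.card_pos
  have inv_le (x) (hx : x ∈ C) :
      ((orbit G x).ncard : ℚ)⁻¹ ≤ {g : G | g • x ∈ s}.ncard / Nat.card G := by
    have orbit_pos : 0 < (orbit G x).ncard :=
      (Set.ncard_pos (Set.finite_range _)).2 (nonempty_orbit x)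
    rw [inv_le_iff_one_le_mul₀' (mod_cast orbit_pos), mul_div_assoc', one_le_div hG]
    exact_mod_cast card_le_ncard_orbit_mul_ncard_smul_mem (hCs x hx)
  calc ∑ x ∈ C, ((orbit G x).ncard : ℚ)⁻¹
      ≤ ∑ x ∈ C, ({g : G | g • x ∈ s}.ncard : ℚ) / Nat.card G := sum_le_sum inv_le
    _ = (∑ x ∈ C, {g : G | g • x ∈ s}.ncard : ℕ) / Nat.card G := by
      rw [← sum_div, Nat.cast_sum]
    _ ≤ 1 := (div_le_one hG).2 (mod_cast sum_ncard_smul_mem_le_card hC hs)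

end Action

theorem finrank_flag {K V : Type*} [Ring K] [StrongRankCondition K] [AddCommGroup V] [Module K V]
    {n : ℕ} (b : Basis (Fin n) K V) (k : Fin (n + 1)) : finrank K (b.flag k) = k := by
  have := nontrivial_of_invariantBasisNumber K
  have hli : LinearIndependent K fun i : {i : Fin n // i.castSucc < k} ↦ b i :=
    b.linearIndependent.comp _ Subtype.val_injective
  have hcard : Fintype.card {i : Fin n // i.castSucc < k} = k := by
    rw [Fintype.card_subtype]
    simp only [Fin.lt_def, Fin.val_castSucc, Fin.card_filter_val_lt]
    omega
  rw [← hcard, ← finrank_span_eq_card hli, Basis.flag, Set.image_eq_range]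
  rfl

section Grassmannian

variable {K V : Type*} [DivisionRing K] [AddCommGroup V] [Module K V]

variable (K V) in
/-- The Grassmannian of `k`-dimensional subspaces of `V`. -/
def grassmannian (k : ℕ) : Set (Submodule K V) := {U | finrank K U = k}

@[simp]
theorem mem_grassmannian {k : ℕ} {U : Submodule K V} : U ∈ grassmannian K V k ↔ finrank K U = k :=
  Iff.rfl

theorem isAntichain_grassmannian [FiniteDimensional K V] (k : ℕ) :
    IsAntichain (· ≤ ·) (grassmannian K V k) :=
  IsAntichain.of_strictMonoOn_antitoneOn (Submodule.finrank_strictMono.strictMonoOn _)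
    fun _ hU _ hW _ ↦ (hW.trans hU.symm).le

theorem orbit_linearEquiv_eq_grassmannian [FiniteDimensional K V] (U : Submodule K V) :
    orbit (V ≃ₗ[K] V) U = grassmannian K V (finrank K U) := by
  ext W
  constructor
  · rintro ⟨g, rfl⟩
    exact LinearEquiv.finrank_map_eq g U
  · intro hW
    obtain ⟨g, hg⟩ :=
      Submodule.exists_linearEquiv_restrict_eq (LinearEquiv.ofFinrankEq U W hW.symm)
    refine ⟨g, Submodule.eq_of_le_of_finrank_eq ?_ ((LinearEquiv.finrank_map_eq g U).trans hW.symm)⟩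
    rintro _ ⟨x, hx, rfl⟩
    exact (hg ⟨x, hx⟩).symm ▸ Subtype.coe_prop _

theorem sum_inv_ncard_grassmannian_le_one [Finite V] {C : Finset (Submodule K V)}
    (hC : IsAntichain (· ≤ ·) (C : Set (Submodule K V))) :
    ∑ U ∈ C, ((grassmannian K V (finrank K U)).ncard : ℚ)⁻¹ ≤ 1 := by
  have : Finite (V ≃ₗ[K] V) := DFunLike.finite _
  let b := finBasis K V
  simp only [← orbit_linearEquiv_eq_grassmannian]
  refine sum_inv_ncard_orbit_le_one hC b.isChain_range_flag fun U _ ↦ ?_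
  let k : Fin (finrank K V + 1) := ⟨finrank K U, Nat.lt_succ_of_le U.finrank_le⟩
  refine ⟨b.flag k, ?_, k, rfl⟩
  rw [orbit_linearEquiv_eq_grassmannian]
  exact finrank_flag b k

theorem span_range_coe_eq_of_linearIndependent {ι : Type*} [Fintype ι] {U : Submodule K V}
    [FiniteDimensional K U] {t : ι → U} (ht : LinearIndependent K t)
    (hU : Fintype.card ι = finrank K U) : Submodule.span K (Set.range fun i ↦ (t i : V)) = U := by
  calc Submodule.span K (Set.range fun i ↦ (t i : V))
      = (Submodule.span K (Set.range t)).map U.subtype := by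
        rw [Submodule.map_span, ← Set.range_comp]; rfl
    _ = U := by rw [ht.span_eq_top_of_card_eq_finrank' hU, U.map_subtype_top]

variable (K V) in
theorem card_linearIndependent_eq_card_sigma_grassmannian [FiniteDimensional K V] (k : ℕ) :
    Nat.card {s : Fin k → V // LinearIndependent K s} =
      Nat.card (Σ U : grassmannian K V k, {t : Fin k → U.1 // LinearIndependent K t}) := by
  symm
  refine Nat.card_eq_of_bijective
    (fun p ↦ ⟨fun i ↦ (p.2.1 i : V), p.2.2.map' _ (Submodule.ker_subtype _)⟩) ⟨?_, ?_⟩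
  · rintro ⟨⟨U, hU⟩, t, ht⟩ ⟨⟨W, hW⟩, t', ht'⟩ h
    dsimp only at t ht t' ht'
    have h : (fun i ↦ (t i : V)) = fun i ↦ (t' i : V) := congrArg Subtype.val h
    obtain rfl : U = W := by
      rw [← span_range_coe_eq_of_linearIndependent ht (by simpa using hU.symm), h,
        span_range_coe_eq_of_linearIndependent ht' (by simpa using hW.symm)]
    obtain rfl : t = t' := funext fun i ↦ Subtype.ext (congrFun h i)
    rfl
  · rintro ⟨s, hs⟩
    exact ⟨⟨⟨Submodule.span K (Set.range s), by simpa using finrank_span_eq_card hs⟩,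
      _, linearIndependent_span hs⟩, rfl⟩

end Grassmannian

theorem pow_succ_sub_one_pos {q : ℕ} (hq : 1 < q) (k : ℕ) : 0 < q ^ (k + 1) - 1 :=
  Nat.sub_pos_of_lt (Nat.one_lt_pow k.succ_ne_zero hq)

theorem prod_pow_sub_pow {q : ℕ} (hq : 0 < q) (n k : ℕ) :
    ∏ i : Fin k, (q ^ n - q ^ i.val) =
      (∏ i ∈ range k, q ^ i) * ∏ i ∈ range k, (q ^ (n - i) - 1) := by
  rw [Fin.prod_univ_eq_prod_range (fun i ↦ q ^ n - q ^ i), ← prod_mul_distrib]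
  refine prod_congr rfl fun i _ ↦ ?_
  rcases le_total i n with h | h
  · rw [Nat.mul_sub_one, ← pow_add, Nat.add_sub_cancel' h]
  · simp [Nat.sub_eq_zero_of_le h, Nat.pow_le_pow_right hq h]

section Count

variable (K V : Type*) [DivisionRing K] [Finite K] [AddCommGroup V] [Module K V] [Finite V]

theorem ncard_grassmannian_mul_prod_pow_sub_pow {k : ℕ} (hk : k ≤ finrank K V) :
    (grassmannian K V k).ncard * ∏ i : Fin k, (Nat.card K ^ k - Nat.card K ^ i.val) =
      ∏ i : Fin k, (Nat.card K ^ finrank K V - Nat.card K ^ i.val) := by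
  have := Fintype.ofFinite K
  have := Fintype.ofFinite (grassmannian K V k)
  have card_frames (U : grassmannian K V k) :
      Nat.card {t : Fin k → U.1 // LinearIndependent K t} =
        ∏ i : Fin k, (Nat.card K ^ k - Nat.card K ^ i.val) := by
    rw [card_linearIndependent U.2.ge, Nat.card_eq_fintype_card, U.2]
  calc (grassmannian K V k).ncard * ∏ i : Fin k, (Nat.card K ^ k - Nat.card K ^ i.val)
      = Nat.card {s : Fin k → V // LinearIndependent K s} := by
        rw [card_linearIndependent_eq_card_sigma_grassmannian, Nat.card_sigma,
          sum_congr rfl fun U _ ↦ card_frames U, sum_const, card_univ, smul_eq_mul,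
          ← Nat.card_eq_fintype_card, Nat.card_coe_set_eq]
    _ = ∏ i : Fin k, (Nat.card K ^ finrank K V - Nat.card K ^ i.val) := by
        rw [card_linearIndependent hk, Nat.card_eq_fintype_card]

-- The `q`-binomial formula with denominators cleared. If `k > finrank K V`, both sides vanish: the
-- right-hand factor at `i = finrank K V` is `q ^ 0 - 1`.
theorem ncard_grassmannian_mul_prod (k : ℕ) :
    (grassmannian K V k).ncard * ∏ i ∈ range k, (Nat.card K ^ (i + 1) - 1) =
      ∏ i ∈ range k, (Nat.card K ^ (finrank K V - i) - 1) := by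
  rcases le_or_gt k (finrank K V) with hk | hk
  · have hpow : 0 < ∏ i ∈ range k, Nat.card K ^ i := prod_pos fun i _ ↦ pow_pos Nat.card_pos i
    have hreflect : ∏ i ∈ range k, (Nat.card K ^ (k - i) - 1) =
        ∏ i ∈ range k, (Nat.card K ^ (i + 1) - 1) := by
      rw [← prod_range_reflect]
      refine prod_congr rfl fun i hi ↦ ?_
      rw [mem_range] at hi
      congr 2
      omega
    have h := ncard_grassmannian_mul_prod_pow_sub_pow K V hk
    rw [prod_pow_sub_pow Nat.card_pos, prod_pow_sub_pow Nat.card_pos, hreflect,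
      mul_left_comm] at h
    exact Nat.eq_of_mul_eq_mul_left hpow h
  · have hempty : grassmannian K V k = ∅ :=
      Set.eq_empty_of_forall_notMem fun U hU ↦ (hU.symm.trans_le U.finrank_le).not_gt hk
    rw [hempty, Set.ncard_empty, zero_mul, prod_eq_zero (mem_range.2 hk) (by simp)]

theorem ncard_grassmannian_succ_mul (k : ℕ) :
    (grassmannian K V (k + 1)).ncard * (Nat.card K ^ (k + 1) - 1) =
      (grassmannian K V k).ncard * (Nat.card K ^ (finrank K V - k) - 1) := by
  have hprod : 0 < ∏ i ∈ range k, (Nat.card K ^ (i + 1) - 1) :=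
    prod_pos fun i _ ↦ pow_succ_sub_one_pos Finite.one_lt_card i
  have h := ncard_grassmannian_mul_prod K V (k + 1)
  rw [prod_range_succ, prod_range_succ, ← ncard_grassmannian_mul_prod K V k] at h
  exact Nat.eq_of_mul_eq_mul_left hprod (by linarith)

theorem ncard_grassmannian_le_succ {k : ℕ} (hk : k + 1 ≤ finrank K V / 2) :
    (grassmannian K V k).ncard ≤ (grassmannian K V (k + 1)).ncard := by
  have hq : 1 < Nat.card K := Finite.one_lt_card
  refine Nat.le_of_mul_le_mul_right ?_ (pow_succ_sub_one_pos hq k)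
  rw [ncard_grassmannian_succ_mul]
  gcongr
  · exact hq.le
  · omega

theorem ncard_grassmannian_succ_le {k : ℕ} (hk : finrank K V / 2 ≤ k) :
    (grassmannian K V (k + 1)).ncard ≤ (grassmannian K V k).ncard := by
  have hq : 1 < Nat.card K := Finite.one_lt_card
  refine Nat.le_of_mul_le_mul_right ?_ (pow_succ_sub_one_pos hq k)
  rw [ncard_grassmannian_succ_mul]
  gcongr
  · exact hq.le
  · omega

theorem ncard_grassmannian_le_middle (k : ℕ) :
    (grassmannian K V k).ncard ≤ (grassmannian K V (finrank K V / 2)).ncard := by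
  rcases le_total k (finrank K V / 2) with hk | hk
  · have hmono : MonotoneOn (fun k ↦ (grassmannian K V k).ncard) (Set.Iic (finrank K V / 2)) :=
      monotoneOn_of_le_add_one Set.ordConnected_Iic
        fun _ _ _ h ↦ ncard_grassmannian_le_succ K V h
    exact hmono hk Set.self_mem_Iic hk
  · have hanti : AntitoneOn (fun k ↦ (grassmannian K V k).ncard) (Set.Ici (finrank K V / 2)) :=
      antitoneOn_nat_Ici_of_succ_le fun _ h ↦ ncard_grassmannian_succ_le K V h
    exact hanti Set.self_mem_Ici hk hk

variable {K V}

theorem card_le_ncard_grassmannian_middle {C : Finset (Submodule K V)}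
    (hC : IsAntichain (· ≤ ·) (C : Set (Submodule K V))) :
    #C ≤ (grassmannian K V (finrank K V / 2)).ncard := by
  set M := (grassmannian K V (finrank K V / 2)).ncard
  have one_le (U : Submodule K V) :
      1 ≤ (M : ℚ) * ((grassmannian K V (finrank K U)).ncard : ℚ)⁻¹ := by
    have hpos : 0 < (grassmannian K V (finrank K U)).ncard :=
      (Set.ncard_pos (Set.toFinite _)).2 ⟨U, rfl⟩
    rw [← div_eq_mul_inv, one_le_div (mod_cast hpos)]
    exact_mod_cast ncard_grassmannian_le_middle K V (finrank K U)
  have card_le : (#C : ℚ) ≤ M := calc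
    (#C : ℚ) = ∑ U ∈ C, 1 := by simp
    _ ≤ ∑ U ∈ C, (M : ℚ) * ((grassmannian K V (finrank K U)).ncard : ℚ)⁻¹ :=
      sum_le_sum fun U _ ↦ one_le U
    _ = M * ∑ U ∈ C, ((grassmannian K V (finrank K U)).ncard : ℚ)⁻¹ := (mul_sum ..).symm
    _ ≤ M := mul_le_of_le_one_right M.cast_nonneg (sum_inv_ncard_grassmannian_le_one hC)
  exact_mod_cast card_le

end Count

theorem stmt9_general (K V : Type*) [DivisionRing K] [Finite K] [AddCommGroup V] [Module K V]
    [Finite V] :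
    IsGreatest {k | ∃ C : Finset (Submodule K V),
        IsAntichain (· ≤ ·) (C : Set (Submodule K V)) ∧ #C = k}
      (grassmannian K V (finrank K V / 2)).ncard := by
  constructor
  · have hfin := (grassmannian K V (finrank K V / 2)).toFinite
    exact ⟨hfin.toFinset, by simpa using isAntichain_grassmannian _,
      (Set.ncard_eq_toFinset_card _ hfin).symm⟩
  · rintro _ ⟨C, hC, rfl⟩
    exact card_le_ncard_grassmannian_middle hC

/-- q-analog of Sperner's theorem: the maximum cardinality of an antichain of linear
subspaces of `F^n` (no member properly contained in another) equals the number of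
`⌊n/2⌋`-dimensional subspaces of `F^n`. -/
theorem stmt9 (F : Type*) [Field F] [Fintype F] (n : ℕ) :
    IsGreatest {k | ∃ C : Finset (Submodule F (Fin n → F)),
        (∀ U ∈ C, ∀ V ∈ C, ¬ U < V) ∧ C.card = k}
      (Nat.card {U : Submodule F (Fin n → F) // Module.finrank F U = n / 2}) := by
  simpa only [isAntichain_iff_forall_not_lt, mem_coe, finrank_fin_fun] using!
    stmt9_general F (Fin n → F)
end
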